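/- arXiv:2305.02175 — 7 statements merged into one kernel-verified Lean document; each statement's English description precedes it below -/
import Mathlib

section
/- Let ℓ, m be natural numbers with m ≤ ℓ and let w ∈ ℂ. Then the (ℓ+m)-th derivative of the polynomial function w ↦ (w² − 1)^ℓ satisfies (d/dw)^{ℓ+m} (w² − 1)^ℓ = (ℓ+m)! · Σ_{k=0}^{ℓ−m} C(ℓ,k) · C(ℓ,m+k) · (w − 1)^{ℓ−m−k} · (w + 1)^k, where C(n,j) denotes the binomial coefficient. -/
open scoped Nat

theorem iteratedDeriv_polynomial_aux (n : ℕ) (p : Polynomial ℂ) :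
    iteratedDeriv n (fun w : ℂ => p.eval w) =
      fun w => (Polynomial.derivative^[n] p).eval w := by
  induction n with
  | zero => simp
  | succ n ih =>
    rw [iteratedDeriv_succ, ih]
    funext w
    rw [Function.iterate_succ_apply', Polynomial.deriv]

/-- For natural numbers `m ≤ ℓ` and `w ∈ ℂ`, the `(ℓ+m)`-th complex
derivative of `w ↦ (w² − 1)^ℓ` equals
`(ℓ+m)! · Σ_{k=0}^{ℓ−m} C(ℓ,k) C(ℓ,m+k) (w−1)^{ℓ−m−k} (w+1)^k`. -/
theorem deriv_pow_sq_sub_one (ℓ m : ℕ) (hm : m ≤ ℓ) (w : ℂ) :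
    iteratedDeriv (ℓ + m) (fun w : ℂ => (w ^ 2 - 1) ^ ℓ) w =
      ((ℓ + m)! : ℂ) *
        ∑ k ∈ Finset.range (ℓ - m + 1),
          (ℓ.choose k : ℂ) * (ℓ.choose (m + k) : ℂ) * (w - 1) ^ (ℓ - m - k) * (w + 1) ^ k := by
  have h1 : (fun w : ℂ => (w ^ 2 - 1) ^ ℓ) = fun w : ℂ =>
      (((Polynomial.X + Polynomial.C 1) ^ ℓ * (Polynomial.X - Polynomial.C 1) ^ ℓ :
        Polynomial ℂ)).eval w := by
    funext w
    simp only [Polynomial.eval_mul, Polynomial.eval_pow, Polynomial.eval_add,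
      Polynomial.eval_sub, Polynomial.eval_X, Polynomial.eval_C]
    rw [← mul_pow]
    ring
  rw [h1, iteratedDeriv_polynomial_aux]
  simp only [Polynomial.iterate_derivative_mul, Polynomial.iterate_derivative_X_add_pow,
    Polynomial.iterate_derivative_X_sub_pow, Polynomial.eval_finsetSum, nsmul_eq_mul,
    Polynomial.eval_mul, Polynomial.eval_pow, Polynomial.eval_add, Polynomial.eval_natCast,
    Polynomial.eval_sub, Polynomial.eval_X, Polynomial.eval_C]
  obtain ⟨d, rfl⟩ := Nat.exists_eq_add_of_le hm
  have e : (m + d + m).succ = m + ((d + 1) + m) := by omega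
  rw [e, Finset.sum_range_add, Finset.sum_range_add, Finset.mul_sum]
  rw [Finset.sum_eq_zero (s := Finset.range m), Finset.sum_eq_zero (s := Finset.range m),
    zero_add, add_zero, Nat.add_sub_cancel_left]
  · refine Finset.sum_congr rfl fun k hk => ?_
    have hk : k ≤ d := by simpa [Nat.lt_succ_iff] using hk
    have a1 : m + d + m - (m + k) = m + d - k := by omega
    have a2 : m + d - (m + d - k) = k := by omega
    have a3 : m + d - (m + k) = d - k := by omega
    rw [a1, a2, a3, Nat.descFactorial_eq_factorial_mul_choose,
      Nat.descFactorial_eq_factorial_mul_choose, Nat.choose_symm (by omega : k ≤ m + d)]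
    have f := Nat.choose_mul_factorial_mul_factorial (by omega : m + k ≤ m + d + m)
    rw [a1] at f
    rw [← f]
    push_cast
    ring
  · intro k _
    rw [Nat.descFactorial_of_lt (by omega : m + d < m + (d + 1 + k))]
    simp
  · intro k hk
    have hk := Finset.mem_range.mp hk
    rw [Nat.descFactorial_of_lt (by omega : m + d < m + d + m - k)]
    simp
end

section
/- Let ℓ, m be natural numbers with m ≤ ℓ, and for z ≥ 1 define the associated Legendre function P_ℓ^m(z) := (1/(2^ℓ · ℓ!)) · (z² − 1)^{m/2} · [(d/dx)^{ℓ+m} (x² − 1)^ℓ]_{x=z}, where (z² − 1)^{m/2} is the real power. Then P_ℓ^m(z) = ((ℓ+m)!/(2^ℓ · ℓ!)) · Σ_{k=0}^{ℓ−m} C(ℓ,k) · C(ℓ,m+k) · (z − 1)^{ℓ−(m/2+k)} · (z + 1)^{m/2+k}, where the powers of (z−1) and (z+1) are real powers (with the convention 0^0 = 1). -/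
open scoped Nat

/-- The associated Legendre function of degree `ℓ` and order `m`, for real `z ≥ 1`:
`P_ℓ^m(z) = (1/(2^ℓ ℓ!)) (z²−1)^{m/2} (d/dx)^{ℓ+m} (x²−1)^ℓ |_{x=z}`,
with `(z²−1)^{m/2}` the real power. -/
noncomputable def assocLegendre (ℓ m : ℕ) (z : ℝ) : ℝ :=
  (1 / (2 ^ ℓ * (ℓ ! : ℝ))) * (z ^ 2 - 1) ^ ((m : ℝ) / 2) *
    iteratedDeriv (ℓ + m) (fun x : ℝ => (x ^ 2 - 1) ^ ℓ) z

open Polynomial in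
theorem legendre_poly_deriv (ℓ m : ℕ) (hm : m ≤ ℓ) (z : ℝ) :
    iteratedDeriv (ℓ + m) (fun x : ℝ => (x ^ 2 - 1) ^ ℓ) z =
      ((ℓ + m)! : ℝ) * ∑ k ∈ Finset.range (ℓ - m + 1),
        (ℓ.choose k : ℝ) * (ℓ.choose (m + k) : ℝ) * (z - 1) ^ (ℓ - (m + k)) * (z + 1) ^ k := by
  have key : ∀ (n : ℕ) (p : ℝ[X]),
      iteratedDeriv n (fun x => p.eval x) = fun x => (derivative^[n] p).eval x := by
    intro n
    induction n with
    | zero => intro p; simp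
    | succ n ih =>
      intro p
      rw [iteratedDeriv_succ, ih]
      funext x
      rw [Polynomial.deriv, Function.iterate_succ_apply']
  have h1 : (fun x : ℝ => (x ^ 2 - 1) ^ ℓ) =
      fun x => ((X + C (1:ℝ)) ^ ℓ * (X - C (1:ℝ)) ^ ℓ).eval x := by
    funext x
    simp only [eval_mul, eval_pow, eval_add, eval_sub, eval_X, eval_C, ← mul_pow]
    ring
  rw [h1, key, iterate_derivative_mul]
  simp only [iterate_derivative_X_add_pow, iterate_derivative_X_sub_pow, eval_finsetSum]
  rw [show (ℓ + m).succ = m + ((ℓ - m + 1) + m) by omega, Finset.sum_range_add,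
    Finset.sum_range_add]
  rw [Finset.sum_eq_zero, zero_add, add_eq_left.2, Finset.mul_sum]
  · refine Finset.sum_congr rfl fun k hk => ?_
    have hk' : k + m ≤ ℓ := by have := Finset.mem_range.1 hk; omega
    rw [show ℓ + m - (m + k) = ℓ - k by omega, show ℓ - (ℓ - k) = k by omega]
    have e1 : (ℓ + m).choose (m + k) * (m + k)! * (ℓ - k)! = (ℓ + m)! := by
      have := Nat.choose_mul_factorial_mul_factorial (n := ℓ + m) (k := m + k) (by omega)
      rwa [show ℓ + m - (m + k) = ℓ - k by omega] at this
    have e1' : ((ℓ + m).choose (m + k) : ℝ) * (m + k)! * (ℓ - k)! = (ℓ + m)! := by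
      exact_mod_cast e1
    rw [Nat.descFactorial_eq_factorial_mul_choose, Nat.descFactorial_eq_factorial_mul_choose,
      Nat.choose_symm (by omega : k ≤ ℓ), ← e1']
    simp only [nsmul_eq_mul, eval_mul, eval_natCast, eval_pow, eval_add, eval_sub, eval_X, eval_C,
      Nat.cast_mul]
    ring
  · refine Finset.sum_eq_zero fun k hk => ?_
    rw [Nat.descFactorial_of_lt (n := ℓ) (k := m + (ℓ - m + 1 + k)) (by omega)]
    simp
  · intro k hk
    have := Finset.mem_range.1 hk
    rw [Nat.descFactorial_of_lt (n := ℓ) (k := ℓ + m - k) (by omega)]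
    simp

/-- Closed-form expansion of the associated Legendre functions
(Lemma 4.5 of the paper). All fractional powers are real powers, with `0^0 = 1`. -/
theorem assocLegendre_eq_sum (ℓ m : ℕ) (hm : m ≤ ℓ) (z : ℝ) (hz : 1 ≤ z) :
    assocLegendre ℓ m z =
      (((ℓ + m)! : ℝ) / (2 ^ ℓ * (ℓ ! : ℝ))) *
        ∑ k ∈ Finset.range (ℓ - m + 1),
          (ℓ.choose k : ℝ) * (ℓ.choose (m + k) : ℝ) *
            (z - 1) ^ ((ℓ : ℝ) - ((m : ℝ) / 2 + (k : ℝ))) * (z + 1) ^ ((m : ℝ) / 2 + (k : ℝ)) := by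
  rw [assocLegendre, legendre_poly_deriv ℓ m hm z]
  have hsum : (z ^ 2 - 1) ^ ((m : ℝ) / 2) * ∑ k ∈ Finset.range (ℓ - m + 1),
        (ℓ.choose k : ℝ) * (ℓ.choose (m + k) : ℝ) * (z - 1) ^ (ℓ - (m + k)) * (z + 1) ^ k =
      ∑ k ∈ Finset.range (ℓ - m + 1),
          (ℓ.choose k : ℝ) * (ℓ.choose (m + k) : ℝ) *
            (z - 1) ^ ((ℓ : ℝ) - ((m : ℝ) / 2 + (k : ℝ))) *
              (z + 1) ^ ((m : ℝ) / 2 + (k : ℝ)) := by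
    rw [Finset.mul_sum]
    refine Finset.sum_congr rfl fun k hk => ?_
    have hk' : m + k ≤ ℓ := by have := Finset.mem_range.1 hk; omega
    have hz1 : 0 ≤ z - 1 := by linarith
    have hz2 : 0 ≤ z + 1 := by linarith
    have hm0 : (0 : ℝ) ≤ (m : ℝ) / 2 := by positivity
    rw [show (ℓ : ℝ) - ((m : ℝ) / 2 + (k : ℝ)) = (m : ℝ) / 2 + ((ℓ - (m + k) : ℕ) : ℝ) by
        rw [Nat.cast_sub hk']; push_cast; ring,
      Real.rpow_add_of_nonneg hz1 hm0 (Nat.cast_nonneg _),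
      Real.rpow_add_of_nonneg hz2 hm0 (Nat.cast_nonneg _), Real.rpow_natCast, Real.rpow_natCast,
      show z ^ 2 - 1 = (z - 1) * (z + 1) by ring, Real.mul_rpow hz1 hz2]
    ring
  rw [← hsum]
  ring
end

section
/- Let ℓ, m be natural numbers with m ≤ ℓ. Then for every real z ≥ 1, (z − 1)^ℓ ≤ √π · (ℓ−m)! · P_ℓ^m(z) / (2^ℓ · Γ(ℓ + 1/2)) ≤ (z + 1)^ℓ, where Γ is the real Gamma function. -/
open scoped Nat

theorem gamma_half_aux (l : ℕ) :
    Real.Gamma ((l : ℝ) + 1 / 2) * (4 ^ l * (l ! : ℝ)) = ((2 * l)! : ℝ) * Real.sqrt Real.pi := by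
  induction l with
  | zero => simp [-one_div, Real.Gamma_one_half_eq]
  | succ k ih =>
    have h1 : (((k + 1 : ℕ) : ℝ) + 1 / 2) = ((k : ℝ) + 1 / 2) + 1 := by push_cast; ring
    have h2 : ((k : ℝ) + 1 / 2) ≠ 0 := by positivity
    rw [h1, Real.Gamma_add_one h2, show 2 * (k + 1) = (2 * k + 1) + 1 by ring,
      Nat.factorial_succ, Nat.factorial_succ, Nat.factorial_succ]
    push_cast
    rw [pow_succ]
    linear_combination (((k : ℝ) + 1 / 2) * 4 * (k + 1)) * ih

theorem leibniz_aux (n l : ℕ) (c d z : ℝ) :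
    iteratedDeriv n (fun x : ℝ => (x - c) ^ l * (x + d) ^ l) z =
      ∑ i ∈ Finset.range (n + 1), (n.choose i * l.descFactorial i * l.descFactorial (n - i) : ℝ) *
        ((z - c) ^ (l - i) * (z + d) ^ (l - (n - i))) := by
  have h := iteratedDeriv_mul (𝕜 := ℝ) (n := n) (x := z) (f := fun x : ℝ => (x - c) ^ l)
    (g := fun x : ℝ => (x + d) ^ l) (by fun_prop) (by fun_prop)
  change iteratedDeriv n ((fun x : ℝ => (x - c) ^ l) * (fun x : ℝ => (x + d) ^ l)) z = _
  rw [h]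
  refine Finset.sum_congr rfl fun i _ => ?_
  have e1 : iteratedDeriv i (fun x : ℝ => (x - c) ^ l) z
      = l.descFactorial i * (z - c) ^ (l - i) := by
    rw [iteratedDeriv_comp_sub_const i (fun x : ℝ => x ^ l) c]
    exact iteratedDeriv_pow l i
  have e2 : iteratedDeriv (n - i) (fun x : ℝ => (x + d) ^ l) z
      = l.descFactorial (n - i) * (z + d) ^ (l - (n - i)) := by
    rw [iteratedDeriv_comp_add_const (n - i) (fun x : ℝ => x ^ l) d]
    exact iteratedDeriv_pow l (n - i)
  rw [e1, e2]; ring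

theorem coeff_aux (n l : ℕ) :
    ∑ i ∈ Finset.range (n + 1), (n.choose i * l.descFactorial i * l.descFactorial (n - i) : ℝ)
      = (2 * l).descFactorial n := by
  have h := leibniz_aux n l 0 0 1
  have e : (fun x : ℝ => (x - 0) ^ l * (x + 0) ^ l) = fun x : ℝ => x ^ (2 * l) := by
    funext x; rw [sub_zero, add_zero, ← pow_add, two_mul]
  rw [e, iteratedDeriv_pow] at h
  simpa using h.symm

theorem deriv_bounds_aux (l m : ℕ) (hm : m ≤ l) (z : ℝ) (hz : 1 ≤ z) :
    ((2 * l).descFactorial (l + m) : ℝ) * (z - 1) ^ (l - m) ≤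
        iteratedDeriv (l + m) (fun x : ℝ => (x ^ 2 - 1) ^ l) z ∧
      iteratedDeriv (l + m) (fun x : ℝ => (x ^ 2 - 1) ^ l) z ≤
        ((2 * l).descFactorial (l + m) : ℝ) * (z + 1) ^ (l - m) := by
  have e : (fun x : ℝ => (x ^ 2 - 1) ^ l) = fun x : ℝ => (x - 1) ^ l * (x + 1) ^ l := by
    funext x; rw [← mul_pow]; ring
  have ha : 0 ≤ z - 1 := by linarith
  have hab : z - 1 ≤ z + 1 := by linarith
  rw [e, leibniz_aux, ← coeff_aux, Finset.sum_mul, Finset.sum_mul]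
  constructor <;> refine Finset.sum_le_sum fun i hi => ?_
  all_goals
    rw [Finset.mem_range] at hi
    by_cases h1 : l < i
    · simp [Nat.descFactorial_eq_zero_iff_lt.mpr h1]
    by_cases h2 : l < l + m - i
    · simp [Nat.descFactorial_eq_zero_iff_lt.mpr h2]
    rw [show l - m = (l - i) + (l - (l + m - i)) by omega, pow_add]
    gcongr

/-- For `m ≤ ℓ` and real `z ≥ 1`,
`(z−1)^ℓ ≤ √π (ℓ−m)! P_ℓ^m(z) / (2^ℓ Γ(ℓ+1/2)) ≤ (z+1)^ℓ` (Lemma 5.2 of the paper). -/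
theorem assocLegendre_two_sided_bound (ℓ m : ℕ) (hm : m ≤ ℓ) (z : ℝ) (hz : 1 ≤ z) :
    (z - 1) ^ ℓ ≤
        Real.sqrt Real.pi * ((ℓ - m)! : ℝ) * assocLegendre ℓ m z /
          (2 ^ ℓ * Real.Gamma ((ℓ : ℝ) + 1 / 2)) ∧
      Real.sqrt Real.pi * ((ℓ - m)! : ℝ) * assocLegendre ℓ m z /
          (2 ^ ℓ * Real.Gamma ((ℓ : ℝ) + 1 / 2)) ≤ (z + 1) ^ ℓ := by
  have hD := deriv_bounds_aux ℓ m hm z hz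
  set D := iteratedDeriv (ℓ + m) (fun x : ℝ => (x ^ 2 - 1) ^ ℓ) z with hDdef
  have hG := gamma_half_aux ℓ
  have ha : 0 ≤ z - 1 := by linarith
  have hs0 : 0 ≤ z ^ 2 - 1 := by nlinarith
  have hs : (z ^ 2 - 1) ^ ((m : ℝ) / 2) = Real.sqrt (z ^ 2 - 1) ^ m := by
    rw [Real.rpow_div_two_eq_sqrt _ hs0, Real.rpow_natCast]
  have hlo : z - 1 ≤ Real.sqrt (z ^ 2 - 1) := Real.le_sqrt_of_sq_le (by nlinarith)
  have hhi : Real.sqrt (z ^ 2 - 1) ≤ z + 1 := by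
    rw [Real.sqrt_le_left (by linarith)]; nlinarith
  have hdf : ((ℓ - m)! : ℝ) * ((2 * ℓ).descFactorial (ℓ + m) : ℝ) = ((2 * ℓ)! : ℝ) := by
    have := Nat.factorial_mul_descFactorial (show ℓ + m ≤ 2 * ℓ by omega)
    rw [show 2 * ℓ - (ℓ + m) = ℓ - m by omega] at this
    exact_mod_cast this
  have hF : (0 : ℝ) < ((2 * ℓ)! : ℝ) := by positivity
  have hdp : (0 : ℝ) < ((2 * ℓ).descFactorial (ℓ + m) : ℝ) := by
    have : 0 < (2 * ℓ).descFactorial (ℓ + m) := Nat.descFactorial_pos.mpr (by omega)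
    exact_mod_cast this
  have hGp : 0 < Real.Gamma ((ℓ : ℝ) + 1 / 2) := Real.Gamma_pos_of_pos (by positivity)
  have hpi : 0 < Real.sqrt Real.pi := Real.sqrt_pos.mpr Real.pi_pos
  have key : Real.sqrt Real.pi * ((ℓ - m)! : ℝ) * assocLegendre ℓ m z /
      (2 ^ ℓ * Real.Gamma ((ℓ : ℝ) + 1 / 2)) =
      Real.sqrt (z ^ 2 - 1) ^ m * (D / ((2 * ℓ).descFactorial (ℓ + m) : ℝ)) := by
    unfold assocLegendre
    rw [hs, ← hDdef]
    have h4 : (4 : ℝ) ^ ℓ = 2 ^ ℓ * 2 ^ ℓ := by rw [← mul_pow]; norm_num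
    rw [h4, ← hdf] at hG
    clear_value D
    generalize Real.Gamma ((ℓ : ℝ) + 1 / 2) = G at hG hGp ⊢
    field_simp
    linear_combination (-1 : ℝ) * Real.sqrt (z ^ 2 - 1) ^ m * D * hG
  rw [key]
  have hpow : ∀ x : ℝ, x ^ ℓ = x ^ m * x ^ (ℓ - m) := fun x => by
    rw [← pow_add]; congr 1; omega
  have h1 : (z - 1) ^ (ℓ - m) ≤ D / ((2 * ℓ).descFactorial (ℓ + m) : ℝ) := by
    rw [le_div_iff₀ hdp]; linarith [hD.1]
  have h2 : D / ((2 * ℓ).descFactorial (ℓ + m) : ℝ) ≤ (z + 1) ^ (ℓ - m) := by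
    rw [div_le_iff₀ hdp]; linarith [hD.2]
  have h3 : 0 ≤ D / ((2 * ℓ).descFactorial (ℓ + m) : ℝ) := (pow_nonneg ha _).trans h1
  rw [hpow (z - 1), hpow (z + 1)]
  constructor <;> gcongr
end

section
/- Let ℓ, m be natural numbers with m ≤ ℓ. Then for every real z ≥ 1, √π · (ℓ−m)! · P_ℓ^m(z) / (2^ℓ · Γ(ℓ + 1/2)) ≤ ((z − 1)/(z + 1))^{m/2} · (z + 1)^ℓ, where ((z−1)/(z+1))^{m/2} is the real power (equal to 0 when z = 1 and m > 0). -/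
open scoped Nat

theorem iterDeriv_shift_pow (c : ℝ) (n k : ℕ) :
    iteratedDeriv k (fun x : ℝ => (x + c) ^ n) =
      fun x => (n.descFactorial k : ℝ) * (x + c) ^ (n - k) := by
  induction k with
  | zero => ext x; simp
  | succ k ih =>
    rw [iteratedDeriv_succ, ih]
    ext x
    have h : HasDerivAt (fun x : ℝ => (n.descFactorial k : ℝ) * (x + c) ^ (n - k))
        ((n.descFactorial k : ℝ) * (((n - k : ℕ) : ℝ) * (x + c) ^ (n - k - 1) * 1)) x :=
      ((((hasDerivAt_id x).add_const c).pow (n - k))).const_mul _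
    rw [h.deriv, Nat.descFactorial_succ, Nat.sub_sub]
    push_cast
    ring

theorem iterDeriv_bound (ℓ k : ℕ) (z : ℝ) (hz : 1 ≤ z) :
    iteratedDeriv k (fun x : ℝ => (x ^ 2 - 1) ^ ℓ) z ≤
      ((2 * ℓ).descFactorial k : ℝ) * (z + 1) ^ (2 * ℓ - k) := by
  have e1 : (fun x : ℝ => (x ^ 2 - 1) ^ ℓ) = fun x => (x + (-1)) ^ ℓ * (x + 1) ^ ℓ := by
    ext x; rw [← mul_pow]; ring
  have e2 : (fun x : ℝ => (x + 1) ^ (2 * ℓ)) = fun x => (x + 1) ^ ℓ * (x + 1) ^ ℓ := by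
    ext x; ring
  have e3 := congrFun (iterDeriv_shift_pow 1 (2 * ℓ) k) z
  rw [← e3, e1, e2, iteratedDeriv_fun_mul (by fun_prop) (by fun_prop),
    iteratedDeriv_fun_mul (by fun_prop) (by fun_prop)]
  simp only [iterDeriv_shift_pow]
  have h0 : 0 ≤ z + -1 := by linarith
  have h1 : 0 ≤ z + 1 := by linarith
  have h2 : z + -1 ≤ z + 1 := by linarith
  gcongr

theorem Gamma_half_fact (ℓ : ℕ) :
    2 ^ ℓ * Real.Gamma ((ℓ : ℝ) + 1 / 2) * (2 ^ ℓ * (ℓ ! : ℝ)) =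
      ((2 * ℓ)! : ℝ) * Real.sqrt Real.pi := by
  rw [Real.Gamma_nat_add_half]
  have h : ((2 * ℓ)! : ℝ) = (2 ^ ℓ * ℓ !) * (2 * ℓ - 1 : ℕ).doubleFactorial := by
    rw [← Nat.cast_ofNat (R := ℝ) (n := 2)]
    norm_cast
    rw [← Nat.doubleFactorial_two_mul]
    cases ℓ with
    | zero => rfl
    | succ n => exact Nat.factorial_eq_mul_doubleFactorial (2 * n + 1)
  rw [h]
  field_simp

/-- For `m ≤ ℓ` and real `z ≥ 1`,
`√π (ℓ−m)! P_ℓ^m(z) / (2^ℓ Γ(ℓ+1/2)) ≤ ((z−1)/(z+1))^{m/2} (z+1)^ℓ`,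
where `((z−1)/(z+1))^{m/2}` is a real power (sharper upper bound from the proof of
Lemma 5.2 of the paper). -/
theorem assocLegendre_sharp_upper_bound (ℓ m : ℕ) (hm : m ≤ ℓ) (z : ℝ) (hz : 1 ≤ z) :
    Real.sqrt Real.pi * ((ℓ - m)! : ℝ) * assocLegendre ℓ m z /
        (2 ^ ℓ * Real.Gamma ((ℓ : ℝ) + 1 / 2)) ≤
      ((z - 1) / (z + 1)) ^ ((m : ℝ) / 2) * (z + 1) ^ ℓ := by
  have hbd := iterDeriv_bound ℓ (ℓ + m) z hz
  have hG := Gamma_half_fact ℓ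
  have hGpos : 0 < Real.Gamma ((ℓ : ℝ) + 1 / 2) := Real.Gamma_pos_of_pos (by positivity)
  have hz1 : 0 < z + 1 := by linarith
  have hz0 : 0 ≤ (z - 1) / (z + 1) := div_nonneg (by linarith) hz1.le
  have hpow : (z ^ 2 - 1) ^ ((m : ℝ) / 2) =
      ((z - 1) / (z + 1)) ^ ((m : ℝ) / 2) * (z + 1) ^ m := by
    have : z ^ 2 - 1 = (z - 1) / (z + 1) * (z + 1) ^ (2 : ℝ) := by
      rw [Real.rpow_two]; field_simp; ring
    rw [this, Real.mul_rpow hz0 (by positivity), ← Real.rpow_mul hz1.le,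
      mul_div_cancel₀ _ (two_ne_zero), Real.rpow_natCast]
  have hsub : 2 * ℓ - (ℓ + m) = ℓ - m := by omega
  have hfac : ((ℓ - m)! : ℝ) * ((2 * ℓ).descFactorial (ℓ + m) : ℝ) = ((2 * ℓ)! : ℝ) := by
    have := Nat.factorial_mul_descFactorial (show ℓ + m ≤ 2 * ℓ by omega)
    rw [hsub] at this
    exact_mod_cast this
  have hzp : (z + 1) ^ ℓ = (z + 1) ^ m * (z + 1) ^ (ℓ - m) := by
    rw [← pow_add]; congr 1; omega
  rw [hsub] at hbd
  unfold assocLegendre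
  rw [hpow, div_le_iff₀ (by positivity), hzp]
  set A := ((z - 1) / (z + 1)) ^ ((m : ℝ) / 2) with hA
  have hA0 : 0 ≤ A := Real.rpow_nonneg hz0 _
  set I := iteratedDeriv (ℓ + m) (fun x : ℝ => (x ^ 2 - 1) ^ ℓ) z
  have hL : (0 : ℝ) < 2 ^ ℓ * (ℓ ! : ℝ) := by positivity
  refine le_of_mul_le_mul_right ?_ hL
  have key : Real.sqrt Real.pi * ((ℓ - m)! : ℝ) * A * (z + 1) ^ m * I ≤
      Real.sqrt Real.pi * ((ℓ - m)! : ℝ) * A * (z + 1) ^ m *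
        (((2 * ℓ).descFactorial (ℓ + m) : ℝ) * (z + 1) ^ (ℓ - m)) := by
    gcongr
  calc _ = Real.sqrt Real.pi * ((ℓ - m)! : ℝ) * A * (z + 1) ^ m * I := by
        field_simp
    _ ≤ _ := key
    _ = A * ((z + 1) ^ m * (z + 1) ^ (ℓ - m)) * (((2 * ℓ)! : ℝ) * Real.sqrt Real.pi) := by
        rw [← hfac]; ring
    _ = _ := by rw [← hG]; ring
end

section
/- Let ℓ be a natural number, z ≥ 1 real, θ ∈ [0, π] and φ ∈ ℝ. Then P_ℓ(z) · 𝖯_ℓ(cos θ) + 2 · Σ_{m=1}^{ℓ} ((ℓ−m)!/(ℓ+m)!) · i^{−m} · P_ℓ^m(z) · 𝖯_ℓ^m(cos θ) · cos(m φ) = P_ℓ( z·cos θ + i·√(z² − 1)·sin θ·cos φ ), where the right-hand side is the Legendre polynomial P_ℓ evaluated at the indicated complex argument. -/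
open scoped Nat

/-- The Legendre polynomial of degree `ℓ`, regarded as an entire function on `ℂ`:
`P_ℓ(w) = (1/(2^ℓ ℓ!)) (d/dw)^ℓ (w²−1)^ℓ`. -/
noncomputable def legendreC (ℓ : ℕ) (w : ℂ) : ℂ :=
  (1 / (2 ^ ℓ * (ℓ ! : ℂ))) * iteratedDeriv ℓ (fun w : ℂ => (w ^ 2 - 1) ^ ℓ) w

/-- The Ferrers function of degree `ℓ` and order `m`, for `x ∈ [−1,1]`:
`𝖯_ℓ^m(x) = ((−1)^m/(2^ℓ ℓ!)) (1−x²)^{m/2} (d/dt)^{ℓ+m} (t²−1)^ℓ |_{t=x}`. -/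
noncomputable def ferrers (ℓ m : ℕ) (x : ℝ) : ℝ :=
  ((-1 : ℝ) ^ m / (2 ^ ℓ * (ℓ ! : ℝ))) * (1 - x ^ 2) ^ ((m : ℝ) / 2) *
    iteratedDeriv (ℓ + m) (fun t : ℝ => (t ^ 2 - 1) ^ ℓ) x

open Polynomial

/-- Coefficients of a power of a linear polynomial. -/
lemma adt_coeff_lin (p q : ℂ) (n k : ℕ) :
    ((C p * X + C q) ^ n : ℂ[X]).coeff k = p ^ k * q ^ (n - k) * (n.choose k : ℂ) := by
  rw [add_pow, finsetSum_coeff]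
  have : ∀ i ∈ Finset.range (n + 1),
      (((C p * X) ^ i * C q ^ (n - i) * (n.choose i : ℂ[X])) : ℂ[X]).coeff k
        = if k = i then p ^ k * q ^ (n - k) * (n.choose k : ℂ) else 0 := by
    intro i _
    have : (((C p * X) ^ i * C q ^ (n - i) * (n.choose i : ℂ[X])) : ℂ[X])
        = C (p ^ i * q ^ (n - i) * (n.choose i : ℂ)) * X ^ i := by
      simp only [C_mul, C_pow, mul_pow, map_natCast]
      ring
    rw [this, coeff_C_mul, coeff_X_pow]
    split_ifs with h
    · subst h; simp
    · simp
  rw [Finset.sum_congr rfl this, Finset.sum_ite_eq]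
  split_ifs with h
  · rfl
  · rw [Nat.choose_eq_zero_of_lt (by simpa using h)]
    simp

lemma adt_fact (l k k' i : ℕ) (hk : k + k' = l + l) (hik : i ≤ k) (hil : i ≤ l) :
    k ! * k' ! * (l.choose i * l.choose (k - i)) = l ! * l ! * (k.choose i * k'.choose (l - i)) := by
  by_cases h : k - i ≤ l
  · have h1 := Nat.choose_mul_factorial_mul_factorial hil
    have h2 := Nat.choose_mul_factorial_mul_factorial h
    have h3 := Nat.choose_mul_factorial_mul_factorial hik
    have h4 := Nat.choose_mul_factorial_mul_factorial (show l - i ≤ k' by omega)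
    have e : k' - (l - i) = l - (k - i) := by omega
    rw [e] at h4
    rw [← h3, ← h4]
    conv_rhs => rw [← h1]
    conv_rhs => enter [1, 2]; rw [h1, ← h2]
    ring
  · rw [Nat.choose_eq_zero_of_lt (show l < k - i by omega),
      Nat.choose_eq_zero_of_lt (show k' < l - i by omega)]
    simp

/-- The monomial case of the adjoint invariance of the apolar pairing. -/
lemma adt_pair_monomial (p q p' q' : ℂ) (l k k' : ℕ) (hk : k + k' = l + l) :
    (k ! : ℂ) * (k' ! : ℂ) * ((C p * X + C q) ^ l * (C p' * X + C q') ^ l : ℂ[X]).coeff k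
      = (l ! : ℂ) * (l ! : ℂ) *
        ((C p * X + C p') ^ k * (C q * X + C q') ^ k' : ℂ[X]).coeff l := by
  rw [coeff_mul, coeff_mul, Finset.Nat.sum_antidiagonal_eq_sum_range_succ_mk,
    Finset.Nat.sum_antidiagonal_eq_sum_range_succ_mk]
  simp only [adt_coeff_lin]
  rw [← Finset.sum_subset (s₁ := Finset.range (min k l + 1)),
    ← Finset.sum_subset (s₁ := Finset.range (min k l + 1)) (s₂ := Finset.range (l + 1)),
    Finset.mul_sum, Finset.mul_sum]
  · refine Finset.sum_congr rfl fun i hi => ?_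
    have hi' : i ≤ min k l := by simpa [Nat.lt_succ_iff] using hi
    have hik : i ≤ k := le_trans hi' (min_le_left _ _)
    have hil : i ≤ l := le_trans hi' (min_le_right _ _)
    have hf := congrArg (Nat.cast : ℕ → ℂ) (adt_fact l k k' i hk hik hil)
    push_cast at hf
    have e : k' - (l - i) = l - (k - i) ∨ l < k - i := by omega
    rcases e with e | e
    · rw [e]
      linear_combination (p ^ i * q ^ (l - i) * p' ^ (k - i) * q' ^ (l - (k - i))) * hf
    · rw [Nat.choose_eq_zero_of_lt e, Nat.choose_eq_zero_of_lt (show k' < l - i by omega)]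
      simp
  · intro i hi; simp at *; omega
  · intro i hi hi'
    rw [Nat.choose_eq_zero_of_lt (show k < i by simp at *; omega)]
    simp
  · intro i hi; simp at *; omega
  · intro i hi hi'
    rw [Nat.choose_eq_zero_of_lt (show l < i by simp at *; omega)]
    simp

lemma adt_natDegree_pow (α w β : ℂ) (l : ℕ) :
    ((C α * X ^ 2 + C w * X + C β) ^ l : ℂ[X]).natDegree ≤ 2 * l := by
  have : (C α * X ^ 2 + C w * X + C β : ℂ[X]).natDegree ≤ 2 := natDegree_quadratic_le
  calc _ ≤ l * (C α * X ^ 2 + C w * X + C β : ℂ[X]).natDegree := natDegree_pow_le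
    _ ≤ l * 2 := Nat.mul_le_mul_left _ this
    _ = _ := by ring

/-- Homogenisation of the power of a quadratic polynomial. -/
lemma adt_homog (α w β : ℂ) (l : ℕ) (L M : ℂ[X]) :
    ∑ kl ∈ Finset.HasAntidiagonal.antidiagonal (2 * l),
      C (((C α * X ^ 2 + C w * X + C β) ^ l : ℂ[X]).coeff kl.1) * (L ^ kl.1 * M ^ kl.2)
      = (C α * L ^ 2 + C w * (L * M) + C β * M ^ 2) ^ l := by
  have key : ∀ (f : ℂ[X]) (n : ℕ), MvPolynomial.aeval ![L, M] (f.homogenize n)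
      = ∑ kl ∈ Finset.HasAntidiagonal.antidiagonal n, C (f.coeff kl.1) * (L ^ kl.1 * M ^ kl.2) := by
    intro f n
    rw [homogenize, map_sum]
    refine Finset.sum_congr rfl fun kl _ => ?_
    rw [MvPolynomial.aeval_monomial]
    simp [Finsupp.prod_fintype, Fin.prod_univ_two]
  rw [← key]
  have hp : ((C α * X ^ 2 + C w * X + C β) ^ l : ℂ[X]).homogenize (2 * l)
      = ((C α * X ^ 2 + C w * X + C β : ℂ[X]).homogenize 2) ^ l := by
    induction l with
    | zero => simp
    | succ l ih =>
      rw [pow_succ (C α * X ^ 2 + C w * X + C β : ℂ[X]), pow_succ (homogenize _ _), ← ih, show 2 * (l + 1) = 2 * l + 2 by ring,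
        homogenize_mul _ _ (adt_natDegree_pow α w β l) natDegree_quadratic_le]
  rw [hp, map_pow]
  congr 1
  simp
  try ring

/-- The apolar pairing of two powers of quadratics, one of which factors. -/
lemma adt_pairing (α w β p q p' q' : ℂ) (l : ℕ) :
    ∑ kl ∈ Finset.HasAntidiagonal.antidiagonal (2 * l), (kl.1 ! : ℂ) * (kl.2 ! : ℂ) *
        ((C α * X ^ 2 + C w * X + C β) ^ l : ℂ[X]).coeff kl.1 *
        ((C p * X + C q) ^ l * (C p' * X + C q') ^ l : ℂ[X]).coeff kl.1
      = (l ! : ℂ) * (l ! : ℂ) *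
        ((C α * (C p * X + C p') ^ 2 + C w * ((C p * X + C p') * (C q * X + C q'))
          + C β * (C q * X + C q') ^ 2) ^ l : ℂ[X]).coeff l := by
  rw [← adt_homog, finsetSum_coeff, Finset.mul_sum]
  refine Finset.sum_congr rfl fun kl hkl => ?_
  have := adt_pair_monomial p q p' q' l kl.1 kl.2 (by
    have := Finset.HasAntidiagonal.mem_antidiagonal.1 hkl; omega)
  rw [coeff_C_mul]
  linear_combination (((C α * X ^ 2 + C w * X + C β) ^ l : ℂ[X]).coeff kl.1) * this

/-- Taylor coefficients of `(x² - 1)^l`. -/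
noncomputable def adtT (l k : ℕ) (w : ℂ) : ℂ := (taylor w ((X ^ 2 - 1) ^ l : ℂ[X])).coeff k

lemma adt_coeff_quad (α w β : ℂ) (l m : ℕ) (h : 4 * α * β = w ^ 2 - 1) :
    ((C α * X ^ 2 + C w * X + C β) ^ l : ℂ[X]).coeff (l + m) * 2 ^ l
      = (2 * α) ^ m * adtT l (l + m) w := by
  have ht : taylor w ((X ^ 2 - 1) ^ l : ℂ[X]) = (X ^ 2 + C (2 * w) * X + C (4 * α * β)) ^ l := by
    rw [taylor_pow, h]
    congr 1
    simp [taylor_apply]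
    simp only [show (C 2 : ℂ[X]) = 2 from rfl]
    ring
  rw [adtT, ht]
  by_cases hα : α = 0
  · subst hα
    have e1 : ((C 0 * X ^ 2 + C w * X + C β) ^ l : ℂ[X]) = (C w * X + C β) ^ l := by simp
    have e2 : ((X ^ 2 + C (2 * w) * X + C (4 * 0 * β)) ^ l : ℂ[X])
        = (C 1 * X + C (2 * w)) ^ l * X ^ l := by
      rw [← mul_pow]; congr 1; simp; ring
    rw [e1, e2, adt_coeff_lin, add_comm l m, coeff_mul_X_pow, adt_coeff_lin]
    rcases Nat.eq_zero_or_pos m with rfl | hm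
    · simp [mul_pow, mul_comm]
    · rw [Nat.choose_eq_zero_of_lt (show l < m + l by omega)]
      simp [hm.ne']
  · have e : ((X ^ 2 + C (2 * w) * X + C (4 * α * β)) ^ l : ℂ[X]).comp (C (2 * α) * X)
        = C ((4 * α) ^ l) * (C α * X ^ 2 + C w * X + C β) ^ l := by
      rw [C_pow, ← mul_pow, pow_comp]
      congr 1
      simp
      simp only [show (C 2 : ℂ[X]) = 2 from rfl, show (C 4 : ℂ[X]) = 4 from rfl]
      ring
    have e' := congrArg (fun f => coeff f (l + m)) e
    simp only [comp_C_mul_X_coeff, coeff_C_mul] at e'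
    have h0 : (2 * α) ^ l ≠ 0 := pow_ne_zero _ (by simpa using hα)
    apply mul_left_cancel₀ h0
    have e4 : (4 * α) ^ l = 2 ^ l * (2 * α) ^ l := by rw [← mul_pow]; ring
    rw [e4, pow_add] at e'
    linear_combination -e'

lemma adt_reflect (α w β : ℂ) (l : ℕ) :
    reflect (2 * l) ((C α * X ^ 2 + C w * X + C β) ^ l : ℂ[X])
      = (C β * X ^ 2 + C w * X + C α) ^ l := by
  induction l with
  | zero => simp
  | succ l ih =>
    rw [pow_succ (C α * X ^ 2 + C w * X + C β : ℂ[X]),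
      pow_succ (C β * X ^ 2 + C w * X + C α : ℂ[X]), ← ih, show 2 * (l + 1) = 2 * l + 2 by ring,
      reflect_mul _ _ (adt_natDegree_pow α w β l) natDegree_quadratic_le]
    congr 1
    have h1 : reflect 2 (C w * X : ℂ[X]) = C w * X := by
      have := reflect_C_mul_X_pow 2 1 (c := w)
      rw [revAt_le (by norm_num)] at this
      simpa using this
    have h2 : reflect 2 (C β : ℂ[X]) = C β * X ^ 2 := reflect_C _ _
    have h3 : reflect 2 (C α * X ^ 2 : ℂ[X]) = C α := by
      have := reflect_C_mul_X_pow 2 2 (c := α)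
      rw [revAt_le (by norm_num)] at this
      simpa using this
    rw [reflect_add, reflect_add, h1, h2, h3]
    ring

lemma adt_coeff_symm (α w β : ℂ) (l m : ℕ) (hm : m ≤ l) :
    ((C α * X ^ 2 + C w * X + C β) ^ l : ℂ[X]).coeff (l - m)
      = ((C β * X ^ 2 + C w * X + C α) ^ l : ℂ[X]).coeff (l + m) := by
  rw [← adt_reflect, coeff_reflect, revAt_le (by omega)]
  congr 1
  omega

lemma adt_sum_split (l : ℕ) (f : ℕ → ℕ → ℂ) :
    ∑ kl ∈ Finset.HasAntidiagonal.antidiagonal (2 * l), f kl.1 kl.2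
      = f l l + ∑ m ∈ Finset.Icc 1 l, (f (l + m) (l - m) + f (l - m) (l + m)) := by
  rw [Finset.Nat.sum_antidiagonal_eq_sum_range_succ_mk]
  simp only
  rw [show (2 * l).succ = l + (l + 1) by omega, Finset.sum_range_add, Finset.sum_range_succ',
    ← Finset.sum_range_reflect, Finset.sum_add_distrib, 
    ← Finset.Ico_add_one_right_eq_Icc, Finset.sum_Ico_eq_sum_range, Finset.sum_Ico_eq_sum_range]
  have e1 : ∀ j ∈ Finset.range l, f (l - 1 - j) (2 * l - (l - 1 - j)) = f (l - (1 + j)) (l + (1 + j)) := by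
    intro j hj
    have := Finset.mem_range.1 hj
    congr 1 <;> omega
  have e2 : ∀ j ∈ Finset.range l, f (l + (j + 1)) (2 * l - (l + (j + 1))) = f (l + (1 + j)) (l - (1 + j)) := by
    intro j hj
    have := Finset.mem_range.1 hj
    congr 1 <;> omega
  rw [Finset.sum_congr rfl e1, Finset.sum_congr rfl e2]
  simp only [Nat.add_sub_cancel, add_zero, show 2 * l - l = l by omega]
  ring

lemma adt_half (y b : ℂ) (hy : b ^ 2 = y ^ 2 - 1) :
    ∃ p q : ℂ, p ^ 2 + q ^ 2 = y ∧ 2 * p * q = b ∧ p ^ 2 - q ^ 2 = 1 := by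
  obtain ⟨r, hr⟩ := IsAlgClosed.exists_pow_nat_eq (y + b) (show 0 < 2 by norm_num)
  have hr0 : r ≠ 0 := by
    rintro rfl
    have : (y + b) * (y - b) = 1 := by linear_combination -hy
    rw [← hr] at this
    simp at this
  have hrinv : r⁻¹ ^ 2 = y - b := by
    have : (y + b) * (y - b) = 1 := by linear_combination -hy
    field_simp
    rw [hr]; linear_combination -this
  have hrr : r * r⁻¹ = 1 := mul_inv_cancel₀ hr0
  refine ⟨(r + r⁻¹) / 2, (r - r⁻¹) / 2, ?_, ?_, ?_⟩
  · linear_combination (hr + hrinv) / 2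
  · linear_combination (hr - hrinv) / 2
  · linear_combination hrr

lemma adt_expand (α x β p q : ℂ) :
    (C α * (C p * X + C q) ^ 2 + C x * ((C p * X + C q) * (C q * X + C p))
          + C β * (C q * X + C p) ^ 2 : ℂ[X])
      = C (x * p * q + α * p ^ 2 + β * q ^ 2) * X ^ 2
        + C (x * (p ^ 2 + q ^ 2) + (α + β) * (p * q + p * q)) * X
        + C (x * p * q + α * q ^ 2 + β * p ^ 2) := by
  simp only [C_add, C_mul, C_pow]
  ring

set_option maxHeartbeats 1000000 in
/-- The algebraic addition theorem. -/
lemma adt_main (l : ℕ) (x y a b s t : ℂ) (hx : a ^ 2 = x ^ 2 - 1) (hy : b ^ 2 = y ^ 2 - 1)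
    (hs : s * t = 1) :
    (l ! : ℂ) * (l ! : ℂ) * (adtT l l x * adtT l l y) +
      ∑ m ∈ Finset.Icc 1 l, ((l + m)! : ℂ) * ((l - m)! : ℂ) *
        ((a * b) ^ m * (s ^ m + t ^ m) * (adtT l (l + m) x * adtT l (l + m) y))
      = (l ! : ℂ) * (l ! : ℂ) * 2 ^ l * adtT l l (x * y + a * b * ((s + t) / 2)) := by
  obtain ⟨p, q, h1, h2, h3⟩ := adt_half y b hy
  have key := adt_pairing (a * s / 2) x (a * t / 2) p q q p l
  have hB : ((C p * X + C q) ^ l * (C q * X + C p) ^ l : ℂ[X])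
      = (C (b / 2) * X ^ 2 + C y * X + C (b / 2)) ^ l := by
    rw [← mul_pow, ← h1, show b / 2 = p * q by rw [← h2]; ring]
    congr 1
    simp only [C_add, C_mul, C_pow]
    ring
  have hR : ((C (a * s / 2) * (C p * X + C q) ^ 2 + C x * ((C p * X + C q) * (C q * X + C p))
          + C (a * t / 2) * (C q * X + C p) ^ 2) ^ l : ℂ[X])
      = (C (x * p * q + a * s / 2 * p ^ 2 + a * t / 2 * q ^ 2) * X ^ 2
        + C (x * y + a * b * ((s + t) / 2)) * X
        + C (x * p * q + a * s / 2 * q ^ 2 + a * t / 2 * p ^ 2)) ^ l := by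
    rw [adt_expand, ← h1, ← h2]
    congr 5
    ring
  have hdisc : 4 * (x * p * q + a * s / 2 * p ^ 2 + a * t / 2 * q ^ 2)
      * (x * p * q + a * s / 2 * q ^ 2 + a * t / 2 * p ^ 2)
      = (x * y + a * b * ((s + t) / 2)) ^ 2 - 1 := by
    rw [← h1, ← h2]
    have h4 : (p ^ 2 - q ^ 2) ^ 2 = 1 := by rw [h3]; ring
    linear_combination (a ^ 2 * (p ^ 2 - q ^ 2) ^ 2) * hs + (p ^ 2 - q ^ 2) ^ 2 * hx - h4
  have hR' := adt_coeff_quad _ _ _ l 0 hdisc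
  rw [hB, hR] at key
  rw [add_zero, pow_zero, one_mul] at hR'
  rw [adt_sum_split l (fun i j => (i ! : ℂ) * (j ! : ℂ) *
        ((C (a * s / 2) * X ^ 2 + C x * X + C (a * t / 2)) ^ l : ℂ[X]).coeff i *
        ((C (b / 2) * X ^ 2 + C y * X + C (b / 2)) ^ l : ℂ[X]).coeff i)] at key
  have hA1 : ∀ m, _ := fun m => adt_coeff_quad (a * s / 2) x (a * t / 2) l m
    (by linear_combination a ^ 2 * hs + hx)
  have hA2 : ∀ m, _ := fun m => adt_coeff_quad (a * t / 2) x (a * s / 2) l m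
    (by linear_combination a ^ 2 * hs + hx)
  have hB1 : ∀ m, _ := fun m => adt_coeff_quad (b / 2) y (b / 2) l m
    (by linear_combination hy)
  have hA0 := hA1 0
  have hB0 := hB1 0
  rw [add_zero, pow_zero, one_mul] at hA0 hB0
  rw [← hR', ← hA0, ← hB0]
  have key' := congrArg (fun u => u * (2 ^ l * 2 ^ l)) key
  simp only [add_mul, Finset.sum_mul] at key'
  have hterm : ∀ m ∈ Finset.Icc 1 l, ((l + m)! : ℂ) * ((l - m)! : ℂ) *
        ((a * b) ^ m * (s ^ m + t ^ m) * (adtT l (l + m) x * adtT l (l + m) y))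
      = ((l + m)! : ℂ) * ((l - m)! : ℂ) *
        ((C (a * s / 2) * X ^ 2 + C x * X + C (a * t / 2)) ^ l : ℂ[X]).coeff (l + m) *
        ((C (b / 2) * X ^ 2 + C y * X + C (b / 2)) ^ l : ℂ[X]).coeff (l + m) * (2 ^ l * 2 ^ l)
       + ((l - m)! : ℂ) * ((l + m)! : ℂ) *
        ((C (a * s / 2) * X ^ 2 + C x * X + C (a * t / 2)) ^ l : ℂ[X]).coeff (l - m) *
        ((C (b / 2) * X ^ 2 + C y * X + C (b / 2)) ^ l : ℂ[X]).coeff (l - m) * (2 ^ l * 2 ^ l) := by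
    intro m hm
    have hml := (Finset.mem_Icc.1 hm).2
    rw [adt_coeff_symm _ _ _ l m hml, adt_coeff_symm _ _ _ l m hml]
    have e1 := hA1 m
    have e2 := hA2 m
    have e3 := hB1 m
    rw [show 2 * (a * s / 2) = a * s by ring, mul_pow] at e1
    rw [show 2 * (a * t / 2) = a * t by ring, mul_pow] at e2
    rw [show 2 * (b / 2) = b by ring] at e3
    rw [mul_pow]
    generalize ((C (a * s / 2) * X ^ 2 + C x * X + C (a * t / 2)) ^ l : ℂ[X]).coeff (l + m) = A1 at *
    generalize ((C (a * t / 2) * X ^ 2 + C x * X + C (a * s / 2)) ^ l : ℂ[X]).coeff (l + m) = A2 at *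
    generalize ((C (b / 2) * X ^ 2 + C y * X + C (b / 2)) ^ l : ℂ[X]).coeff (l + m) = B1 at *
    have f1 : A1 * 2 ^ l * (B1 * 2 ^ l) = (a ^ m * s ^ m * adtT l (l + m) x) *
        (b ^ m * adtT l (l + m) y) := by rw [e1, e3]
    have f2 : A2 * 2 ^ l * (B1 * 2 ^ l) = (a ^ m * t ^ m * adtT l (l + m) x) *
        (b ^ m * adtT l (l + m) y) := by rw [e2, e3]
    linear_combination -((l + m)! : ℂ) * ((l - m)! : ℂ) * (f1 + f2)
  rw [Finset.sum_congr rfl hterm]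
  linear_combination key'

lemma adt_iteratedDeriv_poly {𝕜 : Type*} [NontriviallyNormedField 𝕜] (k : ℕ) (f : 𝕜[X]) :
    iteratedDeriv k (fun w => f.eval w) = fun w => (derivative^[k] f).eval w := by
  induction k with
  | zero => simp
  | succ k ih =>
    rw [iteratedDeriv_succ, ih, Function.iterate_succ_apply']
    ext w
    exact Polynomial.deriv _

lemma adt_iteratedDeriv_complex (l k : ℕ) (w : ℂ) :
    iteratedDeriv k (fun w : ℂ => (w ^ 2 - 1) ^ l) w = (k ! : ℂ) * adtT l k w := by
  have := adt_iteratedDeriv_poly k ((X ^ 2 - 1) ^ l : ℂ[X])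
  simp only [eval_pow, eval_sub, eval_X, eval_one] at this
  rw [this, adtT, taylor_coeff, ← factorial_smul_hasseDeriv]
  simp

lemma adt_iteratedDeriv_real (l k : ℕ) (w : ℝ) :
    ((iteratedDeriv k (fun w : ℝ => (w ^ 2 - 1) ^ l) w : ℝ) : ℂ) = (k ! : ℂ) * adtT l k w := by
  have := adt_iteratedDeriv_poly k ((X ^ 2 - 1) ^ l : ℝ[X])
  have h2 := adt_iteratedDeriv_poly k ((X ^ 2 - 1) ^ l : ℂ[X])
  rw [← adt_iteratedDeriv_complex]
  simp only [eval_pow, eval_sub, eval_X, eval_one] at this h2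
  rw [this, h2]
  have h3 : ((X ^ 2 - 1) ^ l : ℂ[X]) = ((X ^ 2 - 1) ^ l : ℝ[X]).map Complex.ofRealHom := by simp
  rw [h3, iterate_derivative_map]
  simp only [eval_map]
  exact (eval₂_at_apply Complex.ofRealHom w).symm

theorem addition_theorem_upward (ℓ : ℕ) (z θ ϕ : ℝ) (hz : 1 ≤ z)
    (hθ : θ ∈ Set.Icc 0 Real.pi) :
    ((legendreC ℓ (z : ℂ)) * ((ferrers ℓ 0 (Real.cos θ) : ℝ) : ℂ)
        + 2 * ∑ m ∈ Finset.Icc 1 ℓ,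
            (((ℓ - m)! : ℂ) / ((ℓ + m)! : ℂ)) * Complex.I ^ (-(m : ℤ)) *
              ((assocLegendre ℓ m z : ℝ) : ℂ) * ((ferrers ℓ m (Real.cos θ) : ℝ) : ℂ) *
                ((Real.cos ((m : ℝ) * ϕ) : ℝ) : ℂ))
      = legendreC ℓ
          (((z * Real.cos θ : ℝ) : ℂ) +
            Complex.I * ((Real.sqrt (z ^ 2 - 1) * Real.sin θ * Real.cos ϕ : ℝ) : ℂ)) := by
  have hz2 : 0 ≤ z ^ 2 - 1 := by nlinarith
  have hsin : 0 ≤ Real.sin θ := Real.sin_nonneg_of_mem_Icc hθ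
  set a : ℝ := Real.sqrt (z ^ 2 - 1) with ha
  have ha2 : a ^ 2 = z ^ 2 - 1 := Real.sq_sqrt hz2
  have ha0 : 0 ≤ a := Real.sqrt_nonneg _
  have hs2 : Real.sin θ ^ 2 = 1 - Real.cos θ ^ 2 := by
    linear_combination Real.sin_sq_add_cos_sq θ
  have hpow : ∀ (c : ℝ) (m : ℕ), 0 ≤ c → (c ^ 2) ^ ((m : ℝ) / 2) = c ^ m := by
    intro c m hc
    rw [← Real.rpow_natCast c 2, ← Real.rpow_mul hc, ← Real.rpow_natCast c m]
    congr 1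
    push_cast
    ring
  have hfl : (ℓ ! : ℂ) ≠ 0 := by exact_mod_cast Nat.factorial_ne_zero ℓ
  have hx : (a : ℂ) ^ 2 = (z : ℂ) ^ 2 - 1 := by exact_mod_cast ha2
  have hy : (Complex.I * (Real.sin θ : ℂ)) ^ 2 = (Real.cos θ : ℂ) ^ 2 - 1 := by
    have : (Real.sin θ : ℂ) ^ 2 = 1 - (Real.cos θ : ℂ) ^ 2 := by exact_mod_cast hs2
    rw [mul_pow, Complex.I_sq, this]; ring
  have hst : Complex.exp (ϕ * Complex.I) * Complex.exp (-ϕ * Complex.I) = 1 := by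
    rw [← Complex.exp_add]; simp
  have key := adt_main ℓ z (Real.cos θ) a (Complex.I * Real.sin θ) _ _ hx hy hst
  have harg : (z : ℂ) * (Real.cos θ : ℂ) + a * (Complex.I * Real.sin θ) *
      ((Complex.exp (ϕ * Complex.I) + Complex.exp (-ϕ * Complex.I)) / 2)
      = ((z * Real.cos θ : ℝ) : ℂ) +
            Complex.I * ((a * Real.sin θ * Real.cos ϕ : ℝ) : ℂ) := by
    rw [show (Complex.exp (ϕ * Complex.I) + Complex.exp (-ϕ * Complex.I)) / 2
      = Complex.cos ϕ from rfl]
    simp only [Complex.ofReal_mul, Complex.ofReal_cos]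
    ring
  rw [harg] at key
  generalize ((z * Real.cos θ : ℝ) : ℂ) +
            Complex.I * ((a * Real.sin θ * Real.cos ϕ : ℝ) : ℂ) = W at key ⊢
  have hterm : ∀ m ∈ Finset.Icc 1 ℓ,
      2 * ((((ℓ - m)! : ℂ) / ((ℓ + m)! : ℂ)) * Complex.I ^ (-(m : ℤ)) *
              ((assocLegendre ℓ m z : ℝ) : ℂ) * ((ferrers ℓ m (Real.cos θ) : ℝ) : ℂ) *
                ((Real.cos ((m : ℝ) * ϕ) : ℝ) : ℂ))
      = (1 / (2 ^ ℓ * (ℓ ! : ℂ))) ^ 2 * (((ℓ + m)! : ℂ) * ((ℓ - m)! : ℂ) *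
        ((a * (Complex.I * Real.sin θ)) ^ m *
          (Complex.exp (ϕ * Complex.I) ^ m + Complex.exp (-ϕ * Complex.I) ^ m) *
          (adtT ℓ (ℓ + m) z * adtT ℓ (ℓ + m) (Real.cos θ)))) := by
    intro m _
    have hcos : Complex.exp (ϕ * Complex.I) ^ m + Complex.exp (-ϕ * Complex.I) ^ m
        = 2 * ((Real.cos ((m : ℝ) * ϕ) : ℝ) : ℂ) := by
      rw [← Complex.exp_nat_mul, ← Complex.exp_nat_mul, Complex.ofReal_cos, Complex.two_cos]
      congr 2 <;> · push_cast; ring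
    have hI : Complex.I ^ (-(m : ℤ)) * (-1) ^ m = Complex.I ^ m := by
      rw [zpow_neg, zpow_natCast, ← inv_pow, Complex.inv_I, ← mul_pow]
      simp
    rw [hcos, assocLegendre, ferrers, ← ha2, ← hs2, hpow a m ha0, hpow _ m hsin]
    simp only [Complex.ofReal_mul, adt_iteratedDeriv_real]
    have hf : ((ℓ + m)! : ℂ) ≠ 0 := by exact_mod_cast Nat.factorial_ne_zero _
    rw [mul_pow, mul_pow, ← hI]
    push_cast
    field_simp
  rw [Finset.mul_sum, Finset.sum_congr rfl hterm, ← Finset.mul_sum]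
  rw [legendreC, legendreC, ferrers]
  simp only [Complex.ofReal_mul, adt_iteratedDeriv_real, adt_iteratedDeriv_complex, add_zero]
  have e : (1 / (2 ^ ℓ * (ℓ ! : ℂ))) * ((ℓ ! : ℂ) * adtT ℓ ℓ W)
      = (1 / (2 ^ ℓ * (ℓ ! : ℂ))) ^ 2 * ((ℓ ! : ℂ) * (ℓ ! : ℂ) * 2 ^ ℓ * adtT ℓ ℓ W) := by
    field_simp
  rw [e, ← key, mul_add]
  congr 1
  push_cast
  simp
  field_simp
end

section
/- Let κ > 0 be real and let ℓ, m be natural numbers with m ≤ ℓ. Define B_ℓ^m := ∫_0^∞ [γ_ℓ^m · P_ℓ^m(ζ/(2κ) + 1)]² · ζ^{1/2} · e^{−ζ} dζ and C_ℓ^m := (e^{2κ}/(4π²·κ^{2ℓ})) · ((2ℓ+1)·Γ(ℓ+1/2)² / ((ℓ+m)!·(ℓ−m)!)) · Γ(2ℓ + 3/2). Then e^{−2κ} · C_ℓ^m ≤ B_ℓ^m ≤ e^{2κ} · C_ℓ^m. -/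
open scoped Nat
open MeasureTheory

/-- The normalization constant `γ_ℓ^m = [((2ℓ+1)/(4π)) (ℓ−m)!/(ℓ+m)!]^{1/2}`. -/
noncomputable def gammaLM (ℓ m : ℕ) : ℝ :=
  Real.sqrt (((2 * (ℓ : ℝ) + 1) / (4 * Real.pi)) * (((ℓ - m)! : ℝ) / ((ℓ + m)! : ℝ)))

/-- `B_ℓ^m = ∫_0^∞ [γ_ℓ^m P_ℓ^m(ζ/(2κ)+1)]² ζ^{1/2} e^{−ζ} dζ`. -/
noncomputable def Bint (κ : ℝ) (ℓ m : ℕ) : ℝ :=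
  ∫ ζ in Set.Ioi (0 : ℝ),
    (gammaLM ℓ m * assocLegendre ℓ m (ζ / (2 * κ) + 1)) ^ 2 * ζ ^ ((1 : ℝ) / 2) *
      Real.exp (-ζ)

/-- `C_ℓ^m = (e^{2κ}/(4π²κ^{2ℓ})) ((2ℓ+1)Γ(ℓ+1/2)²/((ℓ+m)!(ℓ−m)!)) Γ(2ℓ+3/2)`. -/
noncomputable def Cconst (κ : ℝ) (ℓ m : ℕ) : ℝ :=
  (Real.exp (2 * κ) / (4 * Real.pi ^ 2 * κ ^ (2 * ℓ))) *
    ((2 * (ℓ : ℝ) + 1) * Real.Gamma ((ℓ : ℝ) + 1 / 2) ^ 2 /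
      (((ℓ + m)! : ℝ) * ((ℓ - m)! : ℝ))) *
    Real.Gamma (2 * (ℓ : ℝ) + 3 / 2)

lemma aux_nat (m j i : ℕ) :
    (m + j + i).choose (m + j) * ((m + j + i) + (m + j)).descFactorial ((m + j + i) + m) ≤
      (2 * (m + j + i)).descFactorial ((m + j + i) + m) * (j + i).choose j := by
  have h1 := Nat.add_choose_mul_factorial_mul_factorial (m + j) i
  have h2 := Nat.add_choose_mul_factorial_mul_factorial j i
  rw [← Nat.choose_symm_add] at h1 h2
  have h3 := Nat.factorial_mul_descFactorial
    (show (m + j + i) + m ≤ (m + j + i) + (m + j) by omega)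
  have h4 := Nat.factorial_mul_descFactorial
    (show (m + j + i) + m ≤ 2 * (m + j + i) by omega)
  rw [show (m + j + i) + (m + j) - ((m + j + i) + m) = j by omega] at h3
  rw [show 2 * (m + j + i) - ((m + j + i) + m) = j + i by omega] at h4
  have h5 := Nat.add_choose_mul_factorial_mul_factorial (m + j + i) (m + j)
  rw [← Nat.choose_symm_add] at h5
  have h6 := Nat.add_choose_mul_factorial_mul_factorial (m + j + i) (m + j + i)
  have h7 : ((m + j + i) + (m + j)).choose (m + j + i) ≤
      ((m + j + i) + (m + j + i)).choose (m + j + i) :=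
    Nat.choose_le_choose _ (by omega)
  rw [← two_mul] at h6 h7
  set ℓ := m + j + i
  have key : ℓ ! * (ℓ + (m + j))! ≤ (2 * ℓ)! * (m + j)! := by
    rw [← h5, ← h6]
    calc _ = (ℓ + (m + j)).choose ℓ * (ℓ ! * ℓ ! * (m + j)!) := by ring
      _ ≤ (2 * ℓ).choose ℓ * (ℓ ! * ℓ ! * (m + j)!) := Nat.mul_le_mul_right _ h7
      _ = _ := by ring
  have hpos : 0 < (m + j)! * i ! * j ! := by positivity
  refine Nat.le_of_mul_le_mul_right ?_ hpos
  calc _ = (ℓ.choose (m + j) * (m + j)! * i !) *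
        (j ! * (ℓ + (m + j)).descFactorial (ℓ + m)) := by ring
    _ = ℓ ! * (ℓ + (m + j))! := by rw [h1, h3]
    _ ≤ _ := key
    _ = ((j + i)! * (2 * ℓ).descFactorial (ℓ + m)) * (m + j)! := by rw [h4]
    _ = _ := by rw [← h2]; ring

/-- The explicit derivative as a function of `t = z - 1`. -/
noncomputable def auxD (ℓ m : ℕ) (t : ℝ) : ℝ :=
  ∑ k ∈ Finset.range (ℓ + 1), ((ℓ.choose k : ℝ) * 2 ^ (ℓ - k)) *
    (((ℓ + k).descFactorial (ℓ + m) : ℝ) * t ^ (ℓ + k - (ℓ + m)))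

lemma aux_deriv (ℓ m : ℕ) (t : ℝ) :
    iteratedDeriv (ℓ + m) (fun x : ℝ => (x ^ 2 - 1) ^ ℓ) (t + 1) = auxD ℓ m t := by
  have h : (fun x : ℝ => (x ^ 2 - 1) ^ ℓ) = fun x : ℝ =>
      (fun y : ℝ => ∑ k ∈ Finset.range (ℓ + 1), ((ℓ.choose k : ℝ) * 2 ^ (ℓ - k)) * y ^ (ℓ + k))
        (x - 1) := by
    funext x
    have : x ^ 2 - 1 = (x - 1) * ((x - 1) + 2) := by ring
    simp only
    rw [this, mul_pow, add_pow, Finset.mul_sum]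
    refine Finset.sum_congr rfl fun k _ => ?_
    rw [pow_add]; ring
  rw [h, iteratedDeriv_comp_sub_const (f := fun y : ℝ =>
    ∑ k ∈ Finset.range (ℓ + 1), ((ℓ.choose k : ℝ) * 2 ^ (ℓ - k)) * y ^ (ℓ + k))]
  simp only [add_sub_cancel_right]
  rw [iteratedDeriv_fun_sum (fun i _ => by fun_prop)]
  unfold auxD
  refine Finset.sum_congr rfl fun k _ => ?_
  rw [iteratedDeriv_const_mul_field, iteratedDeriv_pow]

lemma auxD_lower (ℓ m : ℕ) (t : ℝ) (ht : 0 ≤ t) :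
    ((2 * ℓ).descFactorial (ℓ + m) : ℝ) * t ^ (ℓ - m) ≤ auxD ℓ m t := by
  unfold auxD
  rw [Finset.sum_range_succ]
  have : 0 ≤ ∑ k ∈ Finset.range ℓ, ((ℓ.choose k : ℝ) * 2 ^ (ℓ - k)) *
    (((ℓ + k).descFactorial (ℓ + m) : ℝ) * t ^ (ℓ + k - (ℓ + m))) :=
    Finset.sum_nonneg fun k _ => by positivity
  rw [show ℓ + ℓ - (ℓ + m) = ℓ - m by omega, ← two_mul]
  simp only [Nat.choose_self, Nat.cast_one, Nat.sub_self, pow_zero, one_mul]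
  linarith

lemma auxD_upper (ℓ m : ℕ) (hm : m ≤ ℓ) (t : ℝ) (ht : 0 ≤ t) :
    auxD ℓ m t ≤ ((2 * ℓ).descFactorial (ℓ + m) : ℝ) * (t + 2) ^ (ℓ - m) := by
  unfold auxD
  rw [show ℓ + 1 = m + (ℓ - m + 1) by omega, Finset.sum_range_add, Finset.sum_eq_zero, zero_add,
    add_pow, Finset.mul_sum]
  · refine Finset.sum_le_sum fun j hj => ?_
    have hj' : j ≤ ℓ - m := by simpa [Nat.lt_succ_iff] using hj
    obtain ⟨i, rfl⟩ : ∃ i, ℓ = m + j + i := ⟨ℓ - m - j, by omega⟩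
    have := aux_nat m j i
    have h : (((m + j + i).choose (m + j) : ℝ) *
      (((m + j + i) + (m + j)).descFactorial ((m + j + i) + m) : ℝ)) ≤
      ((2 * (m + j + i)).descFactorial ((m + j + i) + m) : ℝ) * ((j + i).choose j : ℝ) := by
      exact_mod_cast this
    rw [show m + j + i + (m + j) - (m + j + i + m) = j by omega,
      show m + j + i - (m + j) = i by omega, show m + j + i - m = j + i by omega,
      show j + i - j = i by omega]
    calc _ = (((m + j + i).choose (m + j) : ℝ) *
      (((m + j + i) + (m + j)).descFactorial ((m + j + i) + m) : ℝ)) * (t ^ j * 2 ^ i) := by ring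
      _ ≤ _ := mul_le_mul_of_nonneg_right h (by positivity)
      _ = _ := by ring
  · intro k hk
    have hk' : k < m := by simpa using hk
    rw [Nat.descFactorial_of_lt (by omega)]
    simp

/-- The constant `γ² (1/(2^ℓ ℓ!))²`. -/
noncomputable def auxc (ℓ m : ℕ) : ℝ :=
  (((2 * (ℓ : ℝ) + 1) / (4 * Real.pi)) * (((ℓ - m)! : ℝ) / ((ℓ + m)! : ℝ))) *
    (1 / (2 ^ ℓ * (ℓ ! : ℝ))) ^ 2

lemma auxc_nonneg (ℓ m : ℕ) : 0 ≤ auxc ℓ m := by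
  unfold auxc
  positivity

lemma aux_sq (ℓ m : ℕ) (t : ℝ) (ht : 0 ≤ t) :
    (gammaLM ℓ m * assocLegendre ℓ m (t + 1)) ^ 2 =
      auxc ℓ m * ((t * (t + 2)) ^ m * auxD ℓ m t ^ 2) := by
  unfold gammaLM assocLegendre auxc
  rw [aux_deriv, show (t + 1) ^ 2 - 1 = t * (t + 2) by ring, mul_pow, Real.sq_sqrt (by positivity),
    mul_pow, mul_pow]
  have : ((t * (t + 2)) ^ ((m : ℝ) / 2)) ^ 2 = (t * (t + 2)) ^ m := by
    rw [← Real.rpow_natCast, ← Real.rpow_mul (by positivity), ← Real.rpow_natCast]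
    congr 1
    push_cast
    ring
  rw [this]
  ring

lemma aux_sq_lower (ℓ m : ℕ) (hm : m ≤ ℓ) (t : ℝ) (ht : 0 ≤ t) :
    auxc ℓ m * ((2 * ℓ).descFactorial (ℓ + m) : ℝ) ^ 2 * t ^ (2 * ℓ) ≤
      (gammaLM ℓ m * assocLegendre ℓ m (t + 1)) ^ 2 := by
  rw [aux_sq ℓ m t ht, mul_assoc]
  refine mul_le_mul_of_nonneg_left ?_ (auxc_nonneg ℓ m)
  have h1 := auxD_lower ℓ m t ht
  have e : t ^ (2 * ℓ) = (t * t) ^ m * (t ^ (ℓ - m)) ^ 2 := by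
    rw [← pow_two, ← pow_mul, ← pow_mul, ← pow_add]; congr 1; omega
  calc _ = (t * t) ^ m * (((2 * ℓ).descFactorial (ℓ + m) : ℝ) * t ^ (ℓ - m)) ^ 2 := by
        rw [e]; ring
    _ ≤ _ := by gcongr; linarith

lemma aux_sq_upper (ℓ m : ℕ) (hm : m ≤ ℓ) (t : ℝ) (ht : 0 ≤ t) :
    (gammaLM ℓ m * assocLegendre ℓ m (t + 1)) ^ 2 ≤
    auxc ℓ m * ((2 * ℓ).descFactorial (ℓ + m) : ℝ) ^ 2 * (t + 2) ^ (2 * ℓ) := by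
  rw [aux_sq ℓ m t ht, mul_assoc]
  refine mul_le_mul_of_nonneg_left ?_ (auxc_nonneg ℓ m)
  have h1 := auxD_upper ℓ m hm t ht
  have h0 : 0 ≤ auxD ℓ m t := le_trans (by positivity) (auxD_lower ℓ m t ht)
  have e : (t + 2) ^ (2 * ℓ) = ((t + 2) * (t + 2)) ^ m * ((t + 2) ^ (ℓ - m)) ^ 2 := by
    rw [← pow_two, ← pow_mul, ← pow_mul, ← pow_add]; congr 1; omega
  calc _ ≤ ((t + 2) * (t + 2)) ^ m *
        (((2 * ℓ).descFactorial (ℓ + m) : ℝ) * (t + 2) ^ (ℓ - m)) ^ 2 := by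
        gcongr; linarith
    _ = _ := by rw [e]; ring

lemma aux_gamma (ℓ : ℕ) :
    Real.Gamma ((ℓ : ℝ) + 1 / 2) = ((2 * ℓ)! : ℝ) * √Real.pi / (4 ^ ℓ * (ℓ ! : ℝ)) := by
  have h : ((2 * ℓ)! : ℝ) = (2 ^ ℓ * (ℓ ! : ℝ)) * ((2 * ℓ - 1)‼ : ℝ) := by
    rcases ℓ with _ | n
    · simp
    · have := Nat.factorial_eq_mul_doubleFactorial (2 * n + 1)
      rw [show 2 * n + 1 + 1 = 2 * (n + 1) by ring, Nat.doubleFactorial_two_mul] at this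
      rw [show 2 * (n + 1) - 1 = 2 * n + 1 by omega, this]
      push_cast
      ring
  rw [Real.Gamma_nat_add_half, h, show (4 : ℝ) = 2 * 2 by norm_num, mul_pow]
  have : (ℓ ! : ℝ) ≠ 0 := by positivity
  field_simp

lemma aux_const (κ : ℝ) (hκ : 0 < κ) (ℓ m : ℕ) (hm : m ≤ ℓ) :
    Cconst κ ℓ m = Real.exp (2 * κ) *
      (auxc ℓ m * ((2 * ℓ).descFactorial (ℓ + m) : ℝ) ^ 2 / (2 * κ) ^ (2 * ℓ)) *
        Real.Gamma (2 * (ℓ : ℝ) + 3 / 2) := by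
  have h4 := Nat.factorial_mul_descFactorial (show ℓ + m ≤ 2 * ℓ by omega)
  rw [show 2 * ℓ - (ℓ + m) = ℓ - m by omega] at h4
  have h5 : ((2 * ℓ)! : ℝ) = ((ℓ - m)! : ℝ) * ((2 * ℓ).descFactorial (ℓ + m) : ℝ) := by
    exact_mod_cast h4.symm
  unfold Cconst auxc
  rw [aux_gamma, h5, div_pow, mul_pow, Real.sq_sqrt Real.pi_pos.le]
  have e : (4 : ℝ) ^ ℓ = (2 ^ ℓ) ^ 2 := by
    rw [← pow_mul, mul_comm, pow_mul]; norm_num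
  have e2 : (2 * κ) ^ (2 * ℓ) = (2 ^ ℓ) ^ 2 * κ ^ (2 * ℓ) := by
    rw [mul_pow, pow_mul, pow_mul, ← e]; norm_num
  rw [e, e2]
  have a1 : (ℓ ! : ℝ) ≠ 0 := by positivity
  have a2 : ((ℓ - m)! : ℝ) ≠ 0 := by positivity
  have a3 : ((ℓ + m)! : ℝ) ≠ 0 := by positivity
  have a4 : Real.pi ≠ 0 := Real.pi_ne_zero
  field_simp

lemma aux_shift (a s : ℝ) (ha : 0 ≤ a) (hs : 0 < s) :
    IntegrableOn (fun x => (x + a) ^ (s - 1) * Real.exp (-x)) (Set.Ioi 0) ∧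
    ∫ x in Set.Ioi (0 : ℝ), (x + a) ^ (s - 1) * Real.exp (-x) ≤ Real.exp a * Real.Gamma s := by
  have hG := Real.GammaIntegral_convergent hs
  have hsub : Set.Ioi a ⊆ Set.Ioi (0 : ℝ) := Set.Ioi_subset_Ioi ha
  have hmp := measurePreserving_add_right (volume : Measure ℝ) a
  have hemb := measurableEmbedding_addRight a
  have hpre : (fun x : ℝ => x + a) ⁻¹' Set.Ioi a = Set.Ioi 0 := by
    ext x; simp
  have heq : (fun x : ℝ => (x + a) ^ (s - 1) * Real.exp (-x)) = fun x =>
      Real.exp a * ((fun y : ℝ => Real.exp (-y) * y ^ (s - 1)) ∘ (fun x => x + a)) x := by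
    funext x
    simp only [Function.comp]
    rw [show -x = a + -(x + a) by ring, Real.exp_add]; ring
  constructor
  · rw [heq]
    refine Integrable.const_mul ?_ _
    have := (hmp.integrableOn_comp_preimage hemb
      (f := fun y : ℝ => Real.exp (-y) * y ^ (s - 1)) (s := Set.Ioi a)).2 (hG.mono_set hsub)
    rwa [hpre] at this
  · rw [heq, integral_const_mul]
    refine mul_le_mul_of_nonneg_left ?_ (Real.exp_pos _).le
    have := hmp.setIntegral_preimage_emb hemb (fun y : ℝ => Real.exp (-y) * y ^ (s - 1)) (Set.Ioi a)
    rw [hpre] at this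
    simp only [Function.comp]
    rw [this, Real.Gamma_eq_integral hs]
    refine setIntegral_mono_set hG ?_ hsub.eventuallyLE
    filter_upwards [ae_restrict_mem measurableSet_Ioi] with x hx
    have : (0 : ℝ) < x := hx
    simp only [Pi.zero_apply]
    positivity

/-- Two-sided bounds `e^{−2κ} C_ℓ^m ≤ B_ℓ^m ≤ e^{2κ} C_ℓ^m`
(from the proof of Lemma 5.4 of the paper). -/
theorem Bint_two_sided_bound (κ : ℝ) (hκ : 0 < κ) (ℓ m : ℕ) (hm : m ≤ ℓ) :
    Real.exp (-(2 * κ)) * Cconst κ ℓ m ≤ Bint κ ℓ m ∧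
      Bint κ ℓ m ≤ Real.exp (2 * κ) * Cconst κ ℓ m := by
  have hs : (0 : ℝ) < 2 * (ℓ : ℝ) + 3 / 2 := by positivity
  rw [aux_const κ hκ ℓ m hm]
  set A := auxc ℓ m * ((2 * ℓ).descFactorial (ℓ + m) : ℝ) ^ 2 with hA
  have hA0 : 0 ≤ A := mul_nonneg (auxc_nonneg ℓ m) (by positivity)
  set K := A / (2 * κ) ^ (2 * ℓ) with hK
  have hK0 : 0 ≤ K := by positivity
  have hrp : ∀ y : ℝ, 0 < y →
      y ^ (2 * (ℓ : ℝ) + 3 / 2 - 1) = y ^ (2 * ℓ) * y ^ ((1 : ℝ) / 2) := by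
    intro y hy
    rw [← Real.rpow_natCast, ← Real.rpow_add hy]
    congr 1
    push_cast
    ring
  obtain ⟨hi4, hb4⟩ := aux_shift (4 * κ) _ (by positivity) hs
  obtain ⟨hi0, -⟩ := aux_shift 0 _ le_rfl hs
  simp only [add_zero] at hi0
  have hup : ∀ x ∈ Set.Ioi (0 : ℝ),
      (gammaLM ℓ m * assocLegendre ℓ m (x / (2 * κ) + 1)) ^ 2 * x ^ ((1 : ℝ) / 2) *
      Real.exp (-x) ≤ K * ((x + 4 * κ) ^ (2 * (ℓ : ℝ) + 3 / 2 - 1) * Real.exp (-x)) := by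
    intro x hx
    have hx : 0 < x := hx
    have h := aux_sq_upper ℓ m hm (x / (2 * κ)) (by positivity)
    rw [hrp _ (by positivity)]
    have e : A * (x / (2 * κ) + 2) ^ (2 * ℓ) = K * (x + 4 * κ) ^ (2 * ℓ) := by
      rw [hK, show x / (2 * κ) + 2 = (x + 4 * κ) / (2 * κ) by field_simp; ring, div_pow]
      ring
    rw [← hA, e] at h
    calc _ ≤ K * (x + 4 * κ) ^ (2 * ℓ) * (x + 4 * κ) ^ ((1 : ℝ) / 2) * Real.exp (-x) := by
          gcongr
          linarith
      _ = _ := by ring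
  have hlow : ∀ x ∈ Set.Ioi (0 : ℝ),
      K * (x ^ (2 * (ℓ : ℝ) + 3 / 2 - 1) * Real.exp (-x)) ≤
      (gammaLM ℓ m * assocLegendre ℓ m (x / (2 * κ) + 1)) ^ 2 * x ^ ((1 : ℝ) / 2) *
      Real.exp (-x) := by
    intro x hx
    have hx : 0 < x := hx
    have h := aux_sq_lower ℓ m hm (x / (2 * κ)) (by positivity)
    rw [hrp _ (by positivity)]
    have e : A * (x / (2 * κ)) ^ (2 * ℓ) = K * x ^ (2 * ℓ) := by
      rw [hK, div_pow]
      ring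
    rw [← hA, e] at h
    calc _ = K * x ^ (2 * ℓ) * x ^ ((1 : ℝ) / 2) * Real.exp (-x) := by ring
      _ ≤ _ := by gcongr
  have hint : IntegrableOn (fun x =>
      (gammaLM ℓ m * assocLegendre ℓ m (x / (2 * κ) + 1)) ^ 2 * x ^ ((1 : ℝ) / 2) *
      Real.exp (-x)) (Set.Ioi 0) := by
    refine Integrable.mono' (hi4.const_mul K) ?_ ?_
    · have hc : Continuous (fun x : ℝ => auxc ℓ m * (((x / (2 * κ)) * (x / (2 * κ) + 2)) ^ m *
          auxD ℓ m (x / (2 * κ)) ^ 2) * x ^ ((1 : ℝ) / 2) * Real.exp (-x)) := by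
        unfold auxD
        have : Continuous (fun x : ℝ => x ^ ((1 : ℝ) / 2)) :=
          Real.continuous_rpow_const (by norm_num)
        fun_prop
      refine hc.aestronglyMeasurable.congr ?_
      filter_upwards [ae_restrict_mem measurableSet_Ioi] with x hx
      have hx : (0 : ℝ) < x := hx
      rw [aux_sq ℓ m _ (by positivity)]
    · filter_upwards [ae_restrict_mem measurableSet_Ioi] with x hx
      have hx' : (0 : ℝ) < x := hx
      rw [Real.norm_of_nonneg (by positivity)]
      exact hup x hx
  unfold Bint
  constructor
  · have h := setIntegral_mono_on (hi0.const_mul K) hint measurableSet_Ioi hlow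
    refine le_trans (le_of_eq ?_) h
    rw [integral_const_mul, Real.Gamma_eq_integral hs, ← mul_assoc, ← mul_assoc, ← Real.exp_add]
    simp only [neg_add_cancel, Real.exp_zero, one_mul]
    congr 2
    funext x
    ring
  · have h := setIntegral_mono_on hint (hi4.const_mul K) measurableSet_Ioi hup
    refine h.trans ?_
    rw [integral_const_mul]
    calc _ ≤ K * (Real.exp (4 * κ) * Real.Gamma (2 * (ℓ : ℝ) + 3 / 2)) :=
          mul_le_mul_of_nonneg_left hb4 hK0
      _ = _ := by
          rw [show 4 * κ = 2 * κ + 2 * κ by ring, Real.exp_add]; ring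
end

section
/- Let κ > 0, ζ ≥ 0, θ₁ ∈ [0,π], θ₂, θ₃ ∈ [0,2π), set z := ζ/(2κ) + 1 and let d := R_θ · d↑(z) ∈ ℂ³ with R_θ the Euler rotation matrix and d↑ the reference upward complex direction. Let v := (sin θ₁ cos θ₂, sin θ₁ sin θ₂, cos θ₁) be the third column of R_θ and u := (cos θ₁ cos θ₂ cos θ₃ − sin θ₂ sin θ₃, cos θ₁ sin θ₂ cos θ₃ + cos θ₂ sin θ₃, −sin θ₁ cos θ₃) the first column of R_θ. Then for every x ∈ ℝ³, exp( i·κ·(d₁x₁ + d₂x₂ + d₃x₃) ) = exp( i·(ζ/2 + κ)·⟨v, x⟩ ) · exp( −√(ζ·(ζ/4 + κ))·⟨u, x⟩ ), where ⟨·,·⟩ is the Euclidean inner product on ℝ³. -/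
/-- Rotation matrix about the `y`-axis. -/
noncomputable def rotY (θ : ℝ) : Matrix (Fin 3) (Fin 3) ℝ :=
  !![Real.cos θ, 0, Real.sin θ; 0, 1, 0; -Real.sin θ, 0, Real.cos θ]

/-- Rotation matrix about the `z`-axis. -/
noncomputable def rotZ (θ : ℝ) : Matrix (Fin 3) (Fin 3) ℝ :=
  !![Real.cos θ, -Real.sin θ, 0; Real.sin θ, Real.cos θ, 0; 0, 0, 1]

/-- The Euler rotation matrix `R_θ = R_z(θ₂) R_y(θ₁) R_z(θ₃)` (z-y-z convention). -/
noncomputable def eulerR (θ₁ θ₂ θ₃ : ℝ) : Matrix (Fin 3) (Fin 3) ℝ :=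
  rotZ θ₂ * rotY θ₁ * rotZ θ₃

/-- The reference upward complex direction `d↑(z) = (i√(z²−1), 0, z) ∈ ℂ³`. -/
noncomputable def dUp (z : ℝ) : Fin 3 → ℂ :=
  ![Complex.I * (Real.sqrt (z ^ 2 - 1) : ℝ), 0, (z : ℂ)]

/-- Explicit oscillation/decay form of an evanescent plane wave:
with `d = R_θ d↑(ζ/(2κ)+1)`, `v` the third column of `R_θ` (propagation direction) and
`u` its first column (decay direction), for all `x ∈ ℝ³`,
`exp(iκ d·x) = exp(i(ζ/2+κ)⟨v,x⟩) · exp(−√(ζ(ζ/4+κ))⟨u,x⟩)`. -/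
theorem evanescent_wave_explicit_form (κ ζ θ₁ θ₂ θ₃ : ℝ) (hκ : 0 < κ) (hζ : 0 ≤ ζ)
    (hθ₁ : θ₁ ∈ Set.Icc 0 Real.pi) (hθ₂ : θ₂ ∈ Set.Ico 0 (2 * Real.pi))
    (hθ₃ : θ₃ ∈ Set.Ico 0 (2 * Real.pi)) :
    let z : ℝ := ζ / (2 * κ) + 1
    let d : Fin 3 → ℂ := ((eulerR θ₁ θ₂ θ₃).map (Complex.ofReal)).mulVec (dUp z)
    let v : Fin 3 → ℝ :=
      ![Real.sin θ₁ * Real.cos θ₂, Real.sin θ₁ * Real.sin θ₂, Real.cos θ₁]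
    let w : Fin 3 → ℝ :=
      ![Real.cos θ₁ * Real.cos θ₂ * Real.cos θ₃ - Real.sin θ₂ * Real.sin θ₃,
        Real.cos θ₁ * Real.sin θ₂ * Real.cos θ₃ + Real.cos θ₂ * Real.sin θ₃,
        -(Real.sin θ₁) * Real.cos θ₃]
    ∀ x : Fin 3 → ℝ,
      Complex.exp (Complex.I * (κ : ℂ) *
          (d 0 * (x 0 : ℂ) + d 1 * (x 1 : ℂ) + d 2 * (x 2 : ℂ))) =
        Complex.exp (Complex.I *
            (((ζ / 2 + κ) * (v 0 * x 0 + v 1 * x 1 + v 2 * x 2) : ℝ) : ℂ)) *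
          Complex.exp
            (-(((Real.sqrt (ζ * (ζ / 4 + κ)) * (w 0 * x 0 + w 1 * x 1 + w 2 * x 2) : ℝ)) : ℂ)) := by
  intro z d v w x
  have hz : κ * z = ζ / 2 + κ := by
    simp only [z]
    field_simp
  have hs : Real.sqrt (ζ * (ζ / 4 + κ)) = κ * Real.sqrt (z ^ 2 - 1) := by
    have h : ζ * (ζ / 4 + κ) = κ ^ 2 * (z ^ 2 - 1) := by
      have h2 : κ ^ 2 * (z ^ 2 - 1) = (κ * z) ^ 2 - κ ^ 2 := by ring
      rw [h2, hz]
      ring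
    rw [h, Real.sqrt_mul (sq_nonneg κ), Real.sqrt_sq hκ.le]
  rw [← Complex.exp_add, hs, ← hz]
  congr 1
  clear_value z
  simp [d, v, w, eulerR, rotZ, rotY, dUp, Matrix.mulVec, dotProduct, Fin.sum_univ_three,
    Matrix.mul_apply]
  generalize ((Real.sqrt (z ^ 2 - 1) : ℝ) : ℂ) = s
  have hI : Complex.I ^ 2 = -1 := Complex.I_sq
  ring_nf
  simp only [hI]
  ring
end
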